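/- Let V ⊆ ℂ^n be an irreducible variety of dimension d. Then there exist polynomials P_1,…,P_{n−d} ∈ ℂ[x_1,…,x_n] such that for every 1 ≤ i ≤ n−d: (i) the maximal dimension of an irreducible component of Z(P_1,…,P_i) containing V is n−i; (ii) Z(P_1,…,P_i) contains an (n−i)-minimal variety of V; and (iii) deg(P_i) = δ_i(V). Moreover, (deg(P_1),…,deg(P_{n−d})) = (δ_1(V),…,δ_{n−d}(V)) is lexicographically least among all tuples (deg(P_1^*),…,deg(P_{n−d}^*)) of polynomials P_1^*,…,P_{n−d}^* satisfying conclusions (i) and (ii). -/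

import Mathlib

open MvPolynomial Set

noncomputable section

namespace Paper

variable (n : ℕ)

/-- The zero locus in `ℂⁿ` of a set of polynomials. -/
def zeroLocus (I : Set (MvPolynomial (Fin n) ℂ)) : Set (Fin n → ℂ) :=
  {x | ∀ f ∈ I, eval x f = 0}

/-- A subset of `ℂⁿ` is algebraic if it is the zero locus of a set of polynomials. -/
def IsAlgebraicSet (V : Set (Fin n → ℂ)) : Prop :=
  ∃ I : Set (MvPolynomial (Fin n) ℂ), V = zeroLocus n I

/-- An irreducible (affine) variety in `ℂⁿ`: a nonempty algebraic set that is not covered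
by two algebraic sets unless it is contained in one of them. -/
def IsIrredVariety (V : Set (Fin n → ℂ)) : Prop :=
  IsAlgebraicSet n V ∧ V.Nonempty ∧
    ∀ V₁ V₂ : Set (Fin n → ℂ), IsAlgebraicSet n V₁ → IsAlgebraicSet n V₂ →
      V ⊆ V₁ ∪ V₂ → V ⊆ V₁ ∨ V ⊆ V₂

/-- There is a strictly increasing chain of `d + 1` irreducible varieties inside `V`. -/
def HasChain (V : Set (Fin n → ℂ)) (d : ℕ) : Prop :=
  ∃ W : Fin (d + 1) → Set (Fin n → ℂ),
    (∀ i, IsIrredVariety n (W i)) ∧ (∀ i j : Fin (d + 1), i < j → W i ⊂ W j) ∧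
      W (Fin.last d) ⊆ V

/-- The (Krull) dimension of a subset of `ℂⁿ`, as the length of the longest chain of
irreducible subvarieties. -/
def dim (V : Set (Fin n → ℂ)) : ℕ := sSup {d | HasChain n V d}

/-- `W` is an irreducible component of `X`: an irreducible subvariety that is maximal among
irreducible subvarieties of `X`. -/
def IsIrredComponent (W X : Set (Fin n → ℂ)) : Prop :=
  IsIrredVariety n W ∧ W ⊆ X ∧
    ∀ W', IsIrredVariety n W' → W ⊆ W' → W' ⊆ X → W' = W

/-- The degree of an irreducible variety `V ⊆ ℂⁿ` of dimension `d` (i.e. the degree of its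
projective closure): the largest finite number of points in which an affine-linear subspace of
dimension `n - d` meets `V`. -/
def degree (V : Set (Fin n → ℂ)) : ℕ :=
  sSup { m | ∃ L : AffineSubspace ℂ (Fin n → ℂ),
    Module.finrank ℂ L.direction = n - dim n V ∧ (V ∩ ↑L).Finite ∧ (V ∩ ↑L).ncard = m }

/-- The degree of an algebraic set: the sum of the degrees of its irreducible components. -/
def degreeSum (X : Set (Fin n → ℂ)) : ℕ :=
  ∑ᶠ W ∈ {W | IsIrredComponent n W X}, degree n W

/-- The maximal dimension of an irreducible component of `X` containing `V` equals `e`. -/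
def MaxCompDimEq (X V : Set (Fin n → ℂ)) (e : ℕ) : Prop :=
  (∃ W, IsIrredComponent n W X ∧ V ⊆ W ∧ dim n W = e) ∧
    ∀ W, IsIrredComponent n W X → V ⊆ W → dim n W ≤ e

/-- The partial degrees `δ_i(V)` of an irreducible variety `V`:  the minimal `δ` such that there
are polynomials of degree at most `δ` cutting out an algebraic set containing `V` whose
irreducible components containing `V` have maximal dimension `n - i`.  By convention
`δ_0(V) = 0`. -/
def partialDeg (V : Set (Fin n → ℂ)) (i : ℕ) : ℕ :=
  if i = 0 then 0
  else sInf { δ | ∃ I : Finset (MvPolynomial (Fin n) ℂ),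
    (∀ f ∈ I, f.totalDegree ≤ δ) ∧ V ⊆ zeroLocus n ↑I ∧
      MaxCompDimEq n (zeroLocus n ↑I) V (n - i) }

/-- The partial degrees as extended naturals, with the convention `δ_i(V) = ∞` for
`i > n - dim V`. -/
def partialDegE (V : Set (Fin n → ℂ)) (i : ℕ) : ℕ∞ :=
  if i ≤ n - dim n V then (partialDeg n V i : ℕ∞) else ⊤

/-- `δ(V)` for an irreducible variety `V`: the minimal `δ` such that `V` is an irreducible
component of the zero set of a finite family of polynomials of degree at most `δ`. -/
def deltaIrr (V : Set (Fin n → ℂ)) : ℕ :=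
  sInf { δ | ∃ I : Finset (MvPolynomial (Fin n) ℂ),
    (∀ f ∈ I, f.totalDegree ≤ δ) ∧ IsIrredComponent n V (zeroLocus n ↑I) }

/-- `δ(V)` for a general algebraic set `V`: the minimal `δ` such that every irreducible
component of `V` is an irreducible component of the zero set of a finite family of polynomials
of degree at most `δ`. -/
def deltaSet (V : Set (Fin n → ℂ)) : ℕ :=
  sInf { δ | ∃ I : Finset (MvPolynomial (Fin n) ℂ),
    (∀ f ∈ I, f.totalDegree ≤ δ) ∧
      ∀ W, IsIrredComponent n W V → IsIrredComponent n W (zeroLocus n ↑I) }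

/-- An algebraic set all of whose irreducible components have dimension `d`. -/
def IsAlgSetOfDim (V : Set (Fin n → ℂ)) (d : ℕ) : Prop :=
  IsAlgebraicSet n V ∧ V.Nonempty ∧ ∀ W, IsIrredComponent n W V → dim n W = d

/-- `Δ_i(V) = max (deg V / (δ_{i+1}(V) ⋯ δ_{n-d}(V))) 1`. -/
def Delta (V : Set (Fin n → ℂ)) (i : ℕ) : ℝ :=
  max ((degree n V : ℝ) / ∏ j ∈ Finset.Icc (i + 1) (n - dim n V), (partialDeg n V j : ℝ)) 1

/-- `i` is admissible with respect to `V` if `δ_{i+1}(V) > 2 i δ_i(V)` (with the convention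
`δ_i(V) = ∞` for `i > n - dim V`). -/
def Admissible (V : Set (Fin n → ℂ)) (i : ℕ) : Prop :=
  ((2 * i : ℕ) : ℕ∞) * partialDegE n V i < partialDegE n V (i + 1)

/-- The interval `ℛ_i(V) = [c₁ δ_i(V)^{n-i} Δ_i(V), (c₀/2) δ_{i+1}(V)^{n-i} Δ_i(V)]`,
where `δ_{n-d+1}(V) = ∞` makes the last interval a half-line. -/
def RSet (c0 c1 : ℝ) (V : Set (Fin n → ℂ)) (i : ℕ) : Set ℝ :=
  if i = n - dim n V then
    Set.Ici (c1 * (partialDeg n V i : ℝ) ^ (n - i) * Delta n V i)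
  else
    Set.Icc (c1 * (partialDeg n V i : ℝ) ^ (n - i) * Delta n V i)
      ((c0 / 2) * (partialDeg n V (i + 1) : ℝ) ^ (n - i) * Delta n V i)

/-- The interval `ℛ^l_{s,τ}(V) = [τ δ_s(V)^{n-(s+l)} Δ_s(V), τ δ_{s+1}(V)^{n-(s+l)} Δ_s(V)]`,
where `δ_{n-d+1}(V) = ∞` makes the last interval a half-line. -/
def RlSet (τ : ℝ) (l : ℕ) (V : Set (Fin n → ℂ)) (s : ℕ) : Set ℝ :=
  if s = n - dim n V then
    Set.Ici (τ * (partialDeg n V s : ℝ) ^ (n - (s + l)) * Delta n V s)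
  else
    Set.Icc (τ * (partialDeg n V s : ℝ) ^ (n - (s + l)) * Delta n V s)
      (τ * (partialDeg n V (s + 1) : ℝ) ^ (n - (s + l)) * Delta n V s)

/-- The ideal `I(V)` of polynomials vanishing on `V ⊆ ℂⁿ`. -/
def vanishingIdeal (V : Set (Fin n → ℂ)) : Ideal (MvPolynomial (Fin n) ℂ) where
  carrier := {f | ∀ x ∈ V, eval x f = 0}
  add_mem' := by
    intro a b ha hb x hx
    simp [ha x hx, hb x hx]
  zero_mem' := by
    intro x hx
    simp
  smul_mem' := by
    intro c f hf x hx
    simp [smul_eq_mul, hf x hx]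

/-- The ideal `I_ℝ(V)` of real polynomials vanishing on `V ⊆ ℂⁿ`. -/
def vanishingIdealR (V : Set (Fin n → ℂ)) : Ideal (MvPolynomial (Fin n) ℝ) :=
  (vanishingIdeal n V).comap (MvPolynomial.map (algebraMap ℝ ℂ))

/-- The affine Hilbert function `H_{I(V)}(m) = dim_ℂ ℂ[x]_{≤ m} / I(V)_{≤ m}`, realised as the
dimension of the image of the space of polynomials of total degree at most `m` in the quotient
ring `ℂ[x]/I(V)`. -/
def hilbert (V : Set (Fin n → ℂ)) (m : ℕ) : ℕ :=
  Module.finrank ℂ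
    (Submodule.map (Ideal.Quotient.mkₐ ℂ (vanishingIdeal n V)).toLinearMap
      (restrictTotalDegree (Fin n) ℂ m))

/-- The real affine Hilbert function `H_{I(V),ℝ}(m) = dim_ℝ ℝ[x]_{≤ m} / I_ℝ(V)_{≤ m}`. -/
def hilbertR (V : Set (Fin n → ℂ)) (m : ℕ) : ℕ :=
  Module.finrank ℝ
    (Submodule.map (Ideal.Quotient.mkₐ ℝ (vanishingIdealR n V)).toLinearMap
      (restrictTotalDegree (Fin n) ℝ m))

/-- The inclusion `ℝⁿ → ℂⁿ`. -/
def toC (x : Fin n → ℝ) : Fin n → ℂ := fun i => (x i : ℂ)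

/-- The set of real points of `V ⊆ ℂⁿ`. -/
def realPts (V : Set (Fin n → ℂ)) : Set (Fin n → ℝ) := {x | toC n x ∈ V}

/-- The real zero set of a real polynomial. -/
def zeroSetR (g : MvPolynomial (Fin n) ℝ) : Set (Fin n → ℝ) := {x | eval x g = 0}

/-- The zero locus of the polynomials `P 1, …, P i` (the first `i` members of a tuple of
polynomials indexed from `1`). -/
def zeroLocusUpTo (P : ℕ → MvPolynomial (Fin n) ℂ) (i : ℕ) : Set (Fin n → ℂ) :=
  zeroLocus n {f | ∃ j : ℕ, 1 ≤ j ∧ j ≤ i ∧ f = P j}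

/-- `V'` is an `(n-s)`-minimal variety of the irreducible variety `V`. -/
def IsMinimalVariety (V V' : Set (Fin n → ℂ)) (s : ℕ) : Prop :=
  IsIrredVariety n V' ∧ V ⊆ V' ∧ dim n V' = n - s ∧
    ∀ f ∈ vanishingIdeal n V, f ∉ vanishingIdeal n V' →
      partialDegE n V (s + 1) ≤ (f.totalDegree : ℕ∞)

/-- `S` is `(k,b)`-free with respect to `T`, for the incidence relation `R`. -/
def KBFree {α β : Type*} (R : α → β → Prop) (S : Finset α) (T : Finset β) (k b : ℕ) : Prop :=
  ¬ ∃ (P : Finset α) (B : Finset β), P ⊆ S ∧ B ⊆ T ∧ P.card = k ∧ B.card = b ∧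
      ∀ s ∈ P, ∀ t ∈ B, R s t

/-- The number of incidences between a finite set of points and a finite family of sets. -/
def incCountAbs {α : Type*} (S : Finset α) (T : Finset (Set α)) : ℕ :=
  ∑ t ∈ T, (↑S ∩ t).ncard

/-- The number of incidences between a finite set of real points and a finite family of
subsets of `ℂⁿ`. -/
def incCount (S : Finset (Fin n → ℝ)) (T : Finset (Set (Fin n → ℂ))) : ℕ :=
  ∑ t ∈ T, (↑S ∩ toC n ⁻¹' t).ncard

/-- The total degree `deg T = ∑_{t ∈ T} deg t` of a finite family of algebraic sets. -/
def degFamily (T : Finset (Set (Fin n → ℂ))) : ℕ := ∑ t ∈ T, degreeSum n t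

/-- The total degree of a finite family of irreducible varieties. -/
def degFamilyIrred (T : Finset (Set (Fin n → ℂ))) : ℕ := ∑ t ∈ T, degree n t

/-- `α_k(d)`. -/
def alpha (k d : ℕ) : ℝ :=
  if k = 1 ∧ d = 1 then 0 else (k : ℝ) * ((d : ℝ) - 1) / ((d : ℝ) * (k : ℝ) - 1)

/-- `β_k(d)`. -/
def beta (k d : ℕ) : ℝ :=
  if k = 1 ∧ d = 1 then 1 else (d : ℝ) * ((k : ℝ) - 1) / ((d : ℝ) * (k : ℝ) - 1)

/-- `τ_d(b,k) = b^{1-β_k(d)} k^{1-α_k(d)}`. -/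
def tauC (d b k : ℕ) : ℝ := (b : ℝ) ^ (1 - beta k d) * (k : ℝ) ^ (1 - alpha k d)

/-- The Chardin–Philippon property of the constant `c₀`: for every pure-dimensional algebraic
set `W ⊆ ℂⁿ` and every `m ≥ 2 (n - dim W) δ(W)` one has `H_{I(W)}(m) ≥ c₀ m^{dim W} deg W`. -/
def ChardinPhilippon (c0 : ℝ) : Prop :=
  ∀ (W : Set (Fin n → ℂ)) (e : ℕ), IsAlgSetOfDim n W e →
    ∀ m : ℕ, 2 * (n - e) * deltaSet n W ≤ m →
      c0 * (m : ℝ) ^ e * (degreeSum n W : ℝ) ≤ (hilbert n W m : ℝ)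

/-- The defining property of the constant `c₁`: for every irreducible variety `V`, every
positive integer lies in some interval `ℛ_i(V)` with `i` admissible with respect to `V`. -/
def CoversPositiveIntegers (c0 c1 : ℝ) : Prop :=
  ∀ V : Set (Fin n → ℂ), IsIrredVariety n V →
    ∀ m : ℕ, 0 < m → ∃ i, Admissible n V i ∧ (m : ℝ) ∈ RSet n c0 c1 V i

/-- `i_V(M)`: the smallest admissible `i` such that `M^{n-i} Δ_i(V) ∈ ℛ_i(V)`. -/
def iV (c0 c1 : ℝ) (V : Set (Fin n → ℂ)) (M : ℕ) : ℕ :=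
  sInf {i | Admissible n V i ∧ (M : ℝ) ^ (n - i) * Delta n V i ∈ RSet n c0 c1 V i}

/-- A real polynomial bisects a finite set `S ⊆ ℝⁿ` if it is positive on at most half of `S`
and negative on at most half of `S`. -/
def Bisects (g : MvPolynomial (Fin n) ℝ) (S : Finset (Fin n → ℝ)) : Prop :=
  ((↑S ∩ {x | 0 < eval x g}).ncard : ℝ) ≤ (S.card : ℝ) / 2 ∧
    ((↑S ∩ {x | eval x g < 0}).ncard : ℝ) ≤ (S.card : ℝ) / 2

/-- The set of `r`-rich points of a family `T`: points lying in at least `r` members of `T`. -/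
def richPts (T : Finset (Set (Fin n → ℂ))) (r : ℕ) : Set (Fin n → ℂ) :=
  {x | r ≤ ({t | t ∈ T ∧ x ∈ t} : Set (Set (Fin n → ℂ))).ncard}

/-- A real hypersurface of degree at most `D`: the real zero set of a nonzero real polynomial
of degree at most `D`. -/
def IsRealHypersurfaceDegLE (t : Set (Fin n → ℝ)) (D : ℕ) : Prop :=
  ∃ p : MvPolynomial (Fin n) ℝ, p ≠ 0 ∧ t = zeroSetR n p ∧ p.totalDegree ≤ D

/-- Lexicographic comparison of the tuples `(f 1, …, f m)` and `(g 1, …, g m)`. -/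
def LexLE (m : ℕ) (f g : ℕ → ℕ) : Prop :=
  (∀ j ∈ Finset.Icc 1 m, f j = g j) ∨
    ∃ i ∈ Finset.Icc 1 m, (∀ j, 1 ≤ j → j < i → f j = g j) ∧ f i < g i


/-!
Measure an algebraic set `X ⊇ V` by the largest dimension of an irreducible variety between `V` and
`X`. In these terms `δ_i(V)` is the least `m` for which the polynomials of degree at most `m` in
`I(V)` already cut this dimension down to `n - i`. The `P_i` are chosen greedily: a complex vector
space is not a finite union of proper subspaces, so a single polynomial of `I(V)` of degree at most
`δ_i(V)` avoids the ideals of all components of `Z(P_1, …, P_{i-1})` of dimension `n - i + 1`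
through `V`.

Any such sequence has minimal varieties in its zero loci. If `δ_i(V) < δ_{i+1}(V)`, then every
`(n - i)`-minimal variety lies in `Z(P_1, …, P_i)`, because each `P_j` with `j ≤ i` has degree
below `δ_{i+1}(V)`. Otherwise, cut an `(n - i + 1)`-minimal variety of `Z(P_1, …, P_{i-1})` by
`P_i`: by Krull's principal ideal theorem its dimension drops by exactly one, and minimality is
inherited as `δ_{i+1}(V) ≤ δ_i(V)`.

Conversely, if `Q_1, …, Q_{n-d}` satisfy (i) and (ii), then `Q_{i+1}` cannot vanish on an
`(n - i)`-minimal variety contained in `Z(Q_1, …, Q_i)`, so its degree is at least `δ_{i+1}(V)`.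
The tuple of partial degrees is thus a lower bound in every entry, not only lexicographically.
-/

section KrullDimension

variable {k : Type*} [Field k]

theorem height_eq_card_of_isMaximal {ι : Type*} [Finite ι] (m : Ideal (MvPolynomial ι k))
    [m.IsMaximal] : m.height = Nat.card ι := by
  induction ι using Finite.induction_empty_option with
  | of_equiv e ih =>
    have := Ideal.comap_isMaximal_of_equiv (renameEquiv k e).toRingEquiv (p := m)
    rw [← (renameEquiv k e).toRingEquiv.height_comap m, ih, Nat.card_congr e]
  | h_empty =>
    simpa using Ideal.height_le_ringKrullDim_of_ne_top (Ideal.IsMaximal.ne_top ‹m.IsMaximal›)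
  | @h_option ι _ ih =>
    let e := (optionEquivLeft k ι).symm.toRingEquiv
    have := Ideal.comap_isMaximal_of_equiv e (p := m)
    have := Polynomial.isMaximal_comap_C_of_isJacobsonRing (m.comap e)
    have : (m.comap e).LiesOver ((m.comap e).comap Polynomial.C) := ⟨rfl⟩
    rw [← e.height_comap m,
      Polynomial.height_eq_height_add_one ((m.comap e).comap Polynomial.C), ih]
    simp

theorem ringKrullDim_le_of_isIntegral (A B : Type*) [CommRing A] [CommRing B] [Algebra A B]
    [Algebra.IsIntegral A B] : ringKrullDim B ≤ ringKrullDim A :=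
  Order.krullDim_le_of_strictMono (PrimeSpectrum.comap (algebraMap A B)) fun p q hpq ↦
    Ideal.IsIntegral.comap_lt_comap (I := p.asIdeal) (J := q.asIdeal) hpq

theorem ringKrullDim_eq_of_isIntegral (A B : Type*) [CommRing A] [CommRing B] [Algebra A B]
    [Algebra.IsIntegral A B] [FaithfulSMul A B] : ringKrullDim B = ringKrullDim A := by
  refine (ringKrullDim_le_of_isIntegral A B).antisymm (iSup_le fun l ↦ ?_)
  have hker : RingHom.ker (algebraMap A B) ≤ l.head.asIdeal := by
    simp [(RingHom.injective_iff_ker_eq_bot _).1 (FaithfulSMul.algebraMap_injective A B)]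
  obtain ⟨Q, -, hQprime, hQ⟩ :=
    Ideal.exists_ideal_over_prime_of_isIntegral (S := B) l.head.asIdeal ⊥ hker
  have : Q.LiesOver l.head.asIdeal := ⟨hQ.symm⟩
  obtain ⟨L, hL, -⟩ := Ideal.exists_ltSeries_of_hasGoingUp l Q
  exact hL ▸ Order.LTSeries.length_le_krullDim L

theorem ringKrullDim_le_quotient_add_one_of_height_eq_one {ι : Type*} [Finite ι]
    (p : Ideal (MvPolynomial ι k)) [p.IsPrime] (hp : p.height = 1) :
    ringKrullDim (MvPolynomial ι k) ≤ ringKrullDim (MvPolynomial ι k ⧸ p) + 1 := by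
  obtain ⟨⟨f, rfl : p = Ideal.span {f}⟩⟩ :=
    UniqueFactorizationMonoid.isPrincipal_of_height_eq_one hp
  obtain ⟨m, hm, hfm⟩ := Ideal.exists_le_maximal (Ideal.span {f}) (Ideal.IsPrime.ne_top ‹_›)
  calc ringKrullDim (MvPolynomial ι k) = m.height := by
        simp [height_eq_card_of_isMaximal m]
    _ ≤ _ := Ideal.height_le_ringKrullDim_quotient_add_one
        (hfm (Ideal.mem_span_singleton_self f))

variable (k) in
theorem ringKrullDim_le_quotient_add_one {A : Type*} [CommRing A] [IsDomain A] [Algebra k A]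
    [Algebra.FiniteType k A] (q : Ideal A) [q.IsPrime] (hq : q.height ≤ 1) (hq0 : q ≠ ⊥) :
    ringKrullDim A ≤ ringKrullDim (A ⧸ q) + 1 := by
  obtain ⟨s, g, hg, hint⟩ := exists_integral_inj_algHom_of_fg k A
  algebraize [g.toRingHom]
  have : Algebra.IsIntegral (MvPolynomial (Fin s) k) A := ⟨hint⟩
  have : FaithfulSMul (MvPolynomial (Fin s) k) A := (faithfulSMul_iff_algebraMap_injective _ _).2 hg
  have : IsNoetherianRing A := Algebra.FiniteType.isNoetherianRing k A
  let p := q.under (MvPolynomial (Fin s) k)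
  have hp0 : p ≠ ⊥ := fun h ↦ hq0 (Ideal.eq_bot_of_comap_eq_bot h)
  have hp : p.height = 1 := by
    refine le_antisymm (le_trans ?_ hq) ?_
    · rw [Ideal.height_eq_height_add_of_liesOver_of_hasGoingDown p q]
      exact le_self_add
    · rwa [Order.one_le_iff_ne_zero, Ne, Ideal.height_eq_zero_iff_eq_bot]
  calc ringKrullDim A = ringKrullDim (MvPolynomial (Fin s) k) := ringKrullDim_eq_of_isIntegral _ _
    _ ≤ ringKrullDim (MvPolynomial (Fin s) k ⧸ p) + 1 :=
        ringKrullDim_le_quotient_add_one_of_height_eq_one p hp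
    _ = ringKrullDim (A ⧸ q) + 1 := by
        rw [ringKrullDim_eq_of_isIntegral (MvPolynomial (Fin s) k ⧸ p) (A ⧸ q)]

variable (k) in
theorem ringKrullDim_quotient_le_of_mem_minimalPrimes {A : Type*} [CommRing A] [Algebra k A]
    [Algebra.FiniteType k A] {p q : Ideal A} [p.IsPrime] {f : A} (hf : f ∉ p)
    (hq : q ∈ (p ⊔ Ideal.span {f}).minimalPrimes) :
    ringKrullDim (A ⧸ p) ≤ ringKrullDim (A ⧸ q) + 1 := by
  have : IsNoetherianRing A := Algebra.FiniteType.isNoetherianRing k A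
  have : q.IsPrime := hq.1.1
  have hpq : p ≤ q := le_sup_left.trans hq.1.2
  have hfq : f ∈ q := le_sup_right.trans hq.1.2 (Ideal.mem_span_singleton_self f)
  have : (q.map (Ideal.Quotient.mk p)).IsPrime := Ideal.isPrime_map_quotientMk_of_isPrime hpq
  have hne : q.map (Ideal.Quotient.mk p) ≠ ⊥ := fun h ↦
    hf (Ideal.Quotient.eq_zero_iff_mem.1
      (Ideal.mem_bot.1 (h ▸ Ideal.mem_map_of_mem (Ideal.Quotient.mk p) hfq)))
  calc ringKrullDim (A ⧸ p)
      ≤ ringKrullDim ((A ⧸ p) ⧸ q.map (Ideal.Quotient.mk p)) + 1 :=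
        ringKrullDim_le_quotient_add_one k _ (Ideal.map_height_le_one_of_mem_minimalPrimes hq) hne
    _ = ringKrullDim (A ⧸ q) + 1 := by
        rw [ringKrullDim_eq_of_ringEquiv (DoubleQuot.quotQuotEquivQuotOfLE hpq)]

end KrullDimension

theorem exists_mem_forall_notMem_of_not_le {K M ι : Type*} [Field K] [Infinite K]
    [AddCommGroup M] [Module K M] [Finite ι] (E : Submodule K M) (p : ι → Submodule K M)
    (h : ∀ i, ¬ E ≤ p i) :
    ∃ x ∈ E, ∀ i, x ∉ p i := by
  by_contra! hcover
  obtain ⟨i, hi⟩ := Subspace.exists_eq_top_of_iUnion_eq_univ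
    (p := fun i ↦ (p i).comap E.subtype) (by
      ext x
      simpa using hcover x x.2)
  exact h i (Submodule.comap_subtype_eq_top.1 hi)

section Dictionary

variable {n} {V W X Y : Set (Fin n → ℂ)} {S T : Set (MvPolynomial (Fin n) ℂ)}

theorem subset_zeroLocus_iff : Y ⊆ zeroLocus n S ↔ S ⊆ vanishingIdeal n Y :=
  ⟨fun h _ hf _ hx ↦ h hx _ hf, fun h _ hx _ hf ↦ h hf _ hx⟩

theorem zeroLocus_anti (h : S ⊆ T) : zeroLocus n T ⊆ zeroLocus n S :=
  fun _ hx _ hf ↦ hx _ (h hf)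

theorem vanishingIdeal_anti (h : V ⊆ W) : vanishingIdeal n W ≤ vanishingIdeal n V :=
  fun _ hf x hx ↦ hf x (h hx)

theorem IsAlgebraicSet.zeroLocus_vanishingIdeal (hX : IsAlgebraicSet n X) :
    zeroLocus n (vanishingIdeal n X) = X := by
  obtain ⟨S, rfl⟩ := hX
  exact (zeroLocus_anti (subset_zeroLocus_iff.1 subset_rfl)).antisymm
    (subset_zeroLocus_iff.2 subset_rfl)

theorem IsAlgebraicSet.vanishingIdeal_le_iff (hX : IsAlgebraicSet n X) :
    vanishingIdeal n X ≤ vanishingIdeal n Y ↔ Y ⊆ X := by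
  rw [← SetLike.coe_subset_coe, ← subset_zeroLocus_iff, hX.zeroLocus_vanishingIdeal]

theorem isAlgebraicSet_zeroLocus : IsAlgebraicSet n (zeroLocus n S) := ⟨S, rfl⟩

theorem zeroLocus_inter : zeroLocus n S ∩ zeroLocus n T = zeroLocus n (S ∪ T) := by
  ext x
  simp [zeroLocus, or_imp, forall_and]

theorem subset_zeroLocus_singleton_iff {f : MvPolynomial (Fin n) ℂ} :
    Y ⊆ zeroLocus n {f} ↔ f ∈ vanishingIdeal n Y := by
  rw [subset_zeroLocus_iff, singleton_subset_iff, SetLike.mem_coe]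

theorem vanishingIdeal_zeroLocus (p : Ideal (MvPolynomial (Fin n) ℂ)) [p.IsPrime] :
    vanishingIdeal n (zeroLocus n p) = p := by
  refine .trans ?_ (MvPolynomial.IsPrime.vanishingIdeal_zeroLocus (K := ℂ) p)
  ext f
  simp only [mem_vanishingIdeal_iff, mem_zeroLocus_iff, aeval_eq_eval]
  rfl

theorem IsIrredVariety.isAlgebraicSet (hV : IsIrredVariety n V) : IsAlgebraicSet n V := hV.1

theorem IsIrredVariety.isPrime_vanishingIdeal (hV : IsIrredVariety n V) :
    (vanishingIdeal n V).IsPrime := by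
  obtain ⟨-, ⟨x, hx⟩, hirr⟩ := hV
  refine ⟨fun htop ↦ ?_, fun {f g} hfg ↦ ?_⟩
  · simpa using (Ideal.eq_top_iff_one _).1 htop x hx
  · have hcover : V ⊆ zeroLocus n {f} ∪ zeroLocus n {g} := fun y hy ↦ by
      simpa [zeroLocus] using hfg y hy
    simpa only [subset_zeroLocus_singleton_iff] using
      hirr _ _ isAlgebraicSet_zeroLocus isAlgebraicSet_zeroLocus hcover

theorem isIrredVariety_zeroLocus (p : Ideal (MvPolynomial (Fin n) ℂ)) [hp : p.IsPrime] :
    IsIrredVariety n (zeroLocus n p) := by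
  refine ⟨isAlgebraicSet_zeroLocus, ?_, ?_⟩
  · rw [nonempty_iff_ne_empty]
    intro hempty
    apply hp.ne_top
    rw [← vanishingIdeal_zeroLocus p, hempty, Ideal.eq_top_iff_one]
    exact fun x hx ↦ absurd hx (notMem_empty x)
  · rintro V₁ V₂ h₁ h₂ hcover
    have hmul : vanishingIdeal n V₁ * vanishingIdeal n V₂ ≤ p := by
      rw [← vanishingIdeal_zeroLocus p, Ideal.mul_le]
      intro f hf g hg x hx
      exact (hcover hx).elim (by simp [hf x ·]) (by simp [hg x ·])
    simpa only [← h₁.vanishingIdeal_le_iff, ← h₂.vanishingIdeal_le_iff,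
      vanishingIdeal_zeroLocus] using hp.mul_le.1 hmul

/-- The Nullstellensatz correspondence: `V ↦ I(V)` is an order-reversing bijection between
irreducible varieties in `ℂⁿ` and prime ideals of the polynomial ring. -/
def irredVarietyOrderIso :
    {V // IsIrredVariety n V} ≃o (PrimeSpectrum (MvPolynomial (Fin n) ℂ))ᵒᵈ where
  toFun V := .toDual ⟨vanishingIdeal n V, V.2.isPrime_vanishingIdeal⟩
  invFun p := ⟨zeroLocus n p.ofDual.asIdeal, have := p.ofDual.isPrime; isIrredVariety_zeroLocus _⟩
  left_inv V := Subtype.ext V.2.isAlgebraicSet.zeroLocus_vanishingIdeal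
  right_inv p := PrimeSpectrum.ext (have := p.ofDual.isPrime; vanishingIdeal_zeroLocus _)
  map_rel_iff' {_ W} := W.2.isAlgebraicSet.vanishingIdeal_le_iff

theorem isIrredComponent_iff (hW : IsIrredVariety n W) (hX : IsAlgebraicSet n X) :
    IsIrredComponent n W X ↔ vanishingIdeal n W ∈ (vanishingIdeal n X).minimalPrimes := by
  refine ⟨fun ⟨_, hWX, hmax⟩ ↦ ⟨⟨hW.isPrime_vanishingIdeal, vanishingIdeal_anti hWX⟩, ?_⟩,
    fun ⟨⟨_, hle⟩, hmin⟩ ↦ ⟨hW, hX.vanishingIdeal_le_iff.1 hle, ?_⟩⟩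
  · rintro q ⟨hq, hXq⟩ hqW
    have hsub : zeroLocus n q ⊆ X := by
      rwa [← hX.vanishingIdeal_le_iff, vanishingIdeal_zeroLocus]
    rw [← hmax _ (isIrredVariety_zeroLocus q) (subset_zeroLocus_iff.2 hqW) hsub,
      vanishingIdeal_zeroLocus]
  · intro W' hW' hWW' hW'X
    exact (hW.isAlgebraicSet.vanishingIdeal_le_iff.1 (hmin
      ⟨hW'.isPrime_vanishingIdeal, vanishingIdeal_anti hW'X⟩ (vanishingIdeal_anti hWW'))).antisymm
      hWW'

theorem finite_setOf_isIrredComponent (hX : IsAlgebraicSet n X) :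
    {W | IsIrredComponent n W X}.Finite := by
  refine .of_injOn (f := vanishingIdeal n) (fun W hW ↦ (isIrredComponent_iff hW.1 hX).1 hW) ?_
    (Ideal.finite_minimalPrimes_of_isNoetherianRing _ (vanishingIdeal n X))
  intro W hW W' hW' h
  rw [← hW.1.isAlgebraicSet.zeroLocus_vanishingIdeal, h,
    hW'.1.isAlgebraicSet.zeroLocus_vanishingIdeal]

theorem exists_isIrredComponent_superset (hW : IsIrredVariety n W) (hX : IsAlgebraicSet n X)
    (hWX : W ⊆ X) : ∃ W', IsIrredComponent n W' X ∧ W ⊆ W' := by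
  have := hW.isPrime_vanishingIdeal
  obtain ⟨q, hq, hqW⟩ := Ideal.exists_minimalPrimes_le (vanishingIdeal_anti hWX)
  have := hq.1.1
  refine ⟨zeroLocus n q, (isIrredComponent_iff (isIrredVariety_zeroLocus q) hX).2 ?_,
    subset_zeroLocus_iff.2 hqW⟩
  rwa [vanishingIdeal_zeroLocus]

end Dictionary

section Dimension

variable {n} {V W : Set (Fin n → ℂ)}

theorem hasChain_iff (hV : IsIrredVariety n V) {d : ℕ} :
    HasChain n V d ↔ d ≤ Order.height (⟨V, hV⟩ : {V // IsIrredVariety n V}) := by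
  refine ⟨fun ⟨W, hW, hlt, hlast⟩ ↦ ?_, fun h ↦ ?_⟩
  · let l : LTSeries {V // IsIrredVariety n V} := .mk d (fun i ↦ ⟨W i, hW i⟩) fun i j ↦ hlt i j
    exact Order.length_le_height (p := l) hlast
  · obtain ⟨l, hlast, rfl⟩ := Order.exists_series_of_le_height _ h
    exact ⟨fun i ↦ l i, fun i ↦ (l i).2, fun i j hij ↦ l.strictMono hij,
      (congrArg Subtype.val hlast).subset⟩

theorem height_eq_ringKrullDim_quotient (hV : IsIrredVariety n V) :
    (Order.height (⟨V, hV⟩ : {V // IsIrredVariety n V}) : WithBot ℕ∞) =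
      ringKrullDim (MvPolynomial (Fin n) ℂ ⧸ vanishingIdeal n V) := by
  rw [← Order.height_orderIso irredVarietyOrderIso, ringKrullDim_quotient]
  exact Order.coheight_eq_krullDim_Ici
    (⟨_, hV.isPrime_vanishingIdeal⟩ : PrimeSpectrum (MvPolynomial (Fin n) ℂ))

theorem coe_dim_eq_height (hV : IsIrredVariety n V) :
    (dim n V : ℕ∞) = Order.height (⟨V, hV⟩ : {V // IsIrredVariety n V}) := by
  have hle : Order.height (⟨V, hV⟩ : {V // IsIrredVariety n V}) ≤ n := by
    rw [← WithBot.coe_le_coe, height_eq_ringKrullDim_quotient]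
    exact (ringKrullDim_quotient_le _).trans (by simp)
  obtain ⟨d, hd⟩ := ENat.ne_top_iff_exists.1 (ne_top_of_le_ne_top (ENat.natCast_ne_top n) hle)
  have hchain : {d | HasChain n V d} = Iic d := by
    ext e
    exact (hasChain_iff hV).trans (by rw [← hd, Nat.cast_le, mem_Iic])
  rw [dim, hchain, csSup_Iic, hd]

theorem coe_dim_eq_ringKrullDim (hV : IsIrredVariety n V) :
    (dim n V : WithBot ℕ∞) = ringKrullDim (MvPolynomial (Fin n) ℂ ⧸ vanishingIdeal n V) := by
  rw [← height_eq_ringKrullDim_quotient hV, ← coe_dim_eq_height hV]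
  rfl

theorem dim_lt_dim (hV : IsIrredVariety n V) (hW : IsIrredVariety n W) (h : V ⊂ W) :
    dim n V < dim n W := by
  rw [← ENat.natCast_lt_natCast, coe_dim_eq_height hV, coe_dim_eq_height hW]
  refine Order.height_strictMono h ?_
  rw [← coe_dim_eq_height hV]
  exact ENat.natCast_lt_top _

theorem dim_le_dim (hV : IsIrredVariety n V) (hW : IsIrredVariety n W) (h : V ⊆ W) :
    dim n V ≤ dim n W :=
  h.eq_or_ssubset.elim (fun h ↦ h ▸ le_rfl) fun h ↦ (dim_lt_dim hV hW h).le

theorem isIrredVariety_univ : IsIrredVariety n univ := by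
  convert! isIrredVariety_zeroLocus (⊥ : Ideal (MvPolynomial (Fin n) ℂ))
  simp [zeroLocus]

theorem vanishingIdeal_univ : vanishingIdeal n univ = ⊥ := by
  convert! vanishingIdeal_zeroLocus (⊥ : Ideal (MvPolynomial (Fin n) ℂ))
  simp [zeroLocus]

theorem dim_univ : dim n univ = n := by
  have h := coe_dim_eq_ringKrullDim (isIrredVariety_univ (n := n))
  rw [vanishingIdeal_univ, ringKrullDim_eq_of_ringEquiv (RingEquiv.quotientBot _)] at h
  simp only [MvPolynomial.ringKrullDim_of_isNoetherianRing, ringKrullDim_eq_zero_of_field,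
    zero_add, Nat.card_fin] at h
  exact_mod_cast h

theorem dim_le (hV : IsIrredVariety n V) : dim n V ≤ n :=
  (dim_le_dim hV isIrredVariety_univ (subset_univ V)).trans_eq dim_univ

theorem exists_hypersurface_section (hV : IsIrredVariety n V) (hW : IsIrredVariety n W)
    (hVW : V ⊆ W) {f : MvPolynomial (Fin n) ℂ} (hfV : f ∈ vanishingIdeal n V)
    (hfW : f ∉ vanishingIdeal n W) :
    ∃ W', IsIrredVariety n W' ∧ V ⊆ W' ∧ W' ⊆ W ∧ W' ⊆ zeroLocus n {f} ∧
      dim n W' + 1 = dim n W := by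
  have := hV.isPrime_vanishingIdeal
  have := hW.isPrime_vanishingIdeal
  obtain ⟨q, hq, hqV⟩ := Ideal.exists_minimalPrimes_le (J := vanishingIdeal n V)
    (sup_le (vanishingIdeal_anti hVW) ((Ideal.span_singleton_le_iff_mem _).2 hfV))
  have := hq.1.1
  have hirr := isIrredVariety_zeroLocus q
  have hsub : zeroLocus n q ⊆ W := by
    rw [← hW.isAlgebraicSet.vanishingIdeal_le_iff, vanishingIdeal_zeroLocus]
    exact le_sup_left.trans hq.1.2
  have hf : zeroLocus n q ⊆ zeroLocus n {f} := by
    rw [subset_zeroLocus_singleton_iff, vanishingIdeal_zeroLocus]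
    exact le_sup_right.trans hq.1.2 (Ideal.mem_span_singleton_self f)
  have hge : dim n W ≤ dim n (zeroLocus n q) + 1 := by
    have h := ringKrullDim_quotient_le_of_mem_minimalPrimes ℂ hfW hq
    rw [← vanishingIdeal_zeroLocus q, ← coe_dim_eq_ringKrullDim hW,
      ← coe_dim_eq_ringKrullDim hirr] at h
    exact_mod_cast h
  have hne : zeroLocus n q ⊂ W :=
    hsub.ssubset_of_not_subset fun h ↦ hfW (subset_zeroLocus_singleton_iff.1 (h.trans hf))
  exact ⟨_, hirr, subset_zeroLocus_iff.2 hqV, hsub, hf,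
    (Nat.succ_le_of_lt (dim_lt_dim hirr hW hne)).antisymm hge⟩

theorem exists_isIrredVariety_dim_eq (hV : IsIrredVariety n V) (hW : IsIrredVariety n W)
    (hVW : V ⊆ W) {e : ℕ} (hVe : dim n V ≤ e) (heW : e ≤ dim n W) :
    ∃ W', IsIrredVariety n W' ∧ V ⊆ W' ∧ W' ⊆ W ∧ dim n W' = e := by
  induction heW using Nat.decreasingInduction with
  | self => exact ⟨W, hW, hVW, subset_rfl, rfl⟩
  | @of_succ e _ ih =>
    obtain ⟨W₁, hW₁, hVW₁, hW₁W, hdim⟩ := ih (by omega)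
    have hnle : ¬ vanishingIdeal n V ≤ vanishingIdeal n W₁ := fun h ↦ by
      have := dim_le_dim hW₁ hV (hV.isAlgebraicSet.vanishingIdeal_le_iff.1 h)
      omega
    obtain ⟨f, hfV, hfW₁⟩ := SetLike.not_le_iff_exists.1 hnle
    obtain ⟨W₂, hW₂, hVW₂, hW₂W₁, -, hdim₂⟩ := exists_hypersurface_section hV hW₁ hVW₁ hfV hfW₁
    exact ⟨W₂, hW₂, hVW₂, hW₂W₁.trans hW₁W, by omega⟩

end Dimension

section LocalDimension

variable {n} {V X Y : Set (Fin n → ℂ)} {P : ℕ → MvPolynomial (Fin n) ℂ} {e i m : ℕ}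

/-- `X` has dimension at most `e` along `V`: every irreducible variety between `V` and `X` has
dimension at most `e`. The varieties need not be components of `X`, which makes this bound
antitone in `X`. -/
def DimAlongLE (X V : Set (Fin n → ℂ)) (e : ℕ) : Prop :=
  ∀ ⦃W⦄, IsIrredVariety n W → V ⊆ W → W ⊆ X → dim n W ≤ e

/-- The common zero locus of the polynomials of total degree at most `m` that vanish on `V`: the
smallest algebraic set containing `V` that can be cut out in degree at most `m`. -/
def lowDegreeLocus (V : Set (Fin n → ℂ)) (m : ℕ) : Set (Fin n → ℂ) :=
  zeroLocus n {f | f ∈ vanishingIdeal n V ∧ f.totalDegree ≤ m}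

theorem DimAlongLE.anti (hX : DimAlongLE X V e) (h : Y ⊆ X) : DimAlongLE Y V e :=
  fun _ hW hVW hWY ↦ hX hW hVW (hWY.trans h)

theorem DimAlongLE.mono {e' : ℕ} (hX : DimAlongLE X V e) (h : e ≤ e') : DimAlongLE X V e' :=
  fun _ hW hVW hWX ↦ (hX hW hVW hWX).trans h

theorem lowDegreeLocus_anti {m' : ℕ} (h : m ≤ m') : lowDegreeLocus V m' ⊆ lowDegreeLocus V m :=
  zeroLocus_anti fun _ hf ↦ ⟨hf.1, hf.2.trans h⟩

theorem maxCompDimEq_iff (hX : IsAlgebraicSet n X) :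
    MaxCompDimEq n X V e ↔
      (∃ W, IsIrredVariety n W ∧ V ⊆ W ∧ W ⊆ X ∧ dim n W = e) ∧ DimAlongLE X V e := by
  have hle : (∀ W, IsIrredComponent n W X → V ⊆ W → dim n W ≤ e) ↔ DimAlongLE X V e := by
    refine ⟨fun h W hW hVW hWX ↦ ?_, fun h W hW hVW ↦ h hW.1 hVW hW.2.1⟩
    obtain ⟨W', hW', hWW'⟩ := exists_isIrredComponent_superset hW hX hWX
    exact (dim_le_dim hW hW'.1 hWW').trans (h W' hW' (hVW.trans hWW'))
  rw [MaxCompDimEq, hle]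
  refine and_congr_left fun hX' ↦ ⟨fun ⟨W, hW, hVW, hdim⟩ ↦ ⟨W, hW.1, hVW, hW.2.1, hdim⟩, ?_⟩
  rintro ⟨W, hW, hVW, hWX, rfl⟩
  obtain ⟨W', hW', hWW'⟩ := exists_isIrredComponent_superset hW hX hWX
  exact ⟨W', hW', hVW.trans hWW',
    (hX' hW'.1 (hVW.trans hWW') hW'.2.1).antisymm (dim_le_dim hW hW'.1 hWW')⟩

theorem exists_dimAlongLE_inter_zeroLocus (hX : IsAlgebraicSet n X) (hXe : DimAlongLE X V (e + 1))
    (hm : DimAlongLE (lowDegreeLocus V m) V e) :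
    ∃ f ∈ vanishingIdeal n V, f.totalDegree ≤ m ∧ DimAlongLE (X ∩ zeroLocus n {f}) V e := by
  let E := (vanishingIdeal n V).restrictScalars ℂ ⊓ restrictTotalDegree (Fin n) ℂ m
  let C := {W | IsIrredComponent n W X ∧ V ⊆ W ∧ dim n W = e + 1}
  have : Finite C := (finite_setOf_isIrredComponent hX).subset fun W hW ↦ hW.1
  have hE : ∀ W : C, ¬ E ≤ (vanishingIdeal n W.1).restrictScalars ℂ := by
    rintro ⟨W, hW, hVW, hdim⟩ hle
    have hWm : W ⊆ lowDegreeLocus V m := subset_zeroLocus_iff.2 fun f hf ↦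
      hle ⟨hf.1, (mem_restrictTotalDegree _ _ _).2 hf.2⟩
    have := hm hW.1 hVW hWm
    omega
  obtain ⟨f, hfE, hfC⟩ := exists_mem_forall_notMem_of_not_le E _ hE
  refine ⟨f, hfE.1, (mem_restrictTotalDegree _ _ _).1 hfE.2, fun W hW hVW hWXf ↦ ?_⟩
  obtain ⟨hWX, hWf⟩ := subset_inter_iff.1 hWXf
  obtain ⟨W', hW', hWW'⟩ := exists_isIrredComponent_superset hW hX hWX
  by_contra! hlt
  have hdim' : dim n W' = e + 1 :=
    (hXe hW'.1 (hVW.trans hWW') hW'.2.1).antisymm (hlt.trans_le (dim_le_dim hW hW'.1 hWW'))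
  have hWeq : W = W' := by
    by_contra hne
    have := dim_lt_dim hW hW'.1 (hWW'.ssubset_of_ne hne)
    omega
  exact hfC ⟨W', hW', hVW.trans hWW', hdim'⟩ (subset_zeroLocus_singleton_iff.1 (hWeq ▸ hWf))

theorem isAlgebraicSet_zeroLocusUpTo : IsAlgebraicSet n (zeroLocusUpTo n P i) :=
  isAlgebraicSet_zeroLocus

theorem subset_zeroLocusUpTo_iff :
    Y ⊆ zeroLocusUpTo n P i ↔ ∀ j ∈ Finset.Icc 1 i, P j ∈ vanishingIdeal n Y := by
  rw [zeroLocusUpTo, subset_zeroLocus_iff]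
  refine ⟨fun h j hj ↦ h ⟨j, (Finset.mem_Icc.1 hj).1, (Finset.mem_Icc.1 hj).2, rfl⟩, ?_⟩
  rintro h _ ⟨j, h1, hi, rfl⟩
  exact h j (Finset.mem_Icc.2 ⟨h1, hi⟩)

theorem zeroLocusUpTo_zero : zeroLocusUpTo n P 0 = univ :=
  univ_subset_iff.1 (subset_zeroLocusUpTo_iff.2 (by simp))

theorem zeroLocusUpTo_succ :
    zeroLocusUpTo n P (i + 1) = zeroLocusUpTo n P i ∩ zeroLocus n {P (i + 1)} := by
  rw [zeroLocusUpTo, zeroLocusUpTo, zeroLocus_inter]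
  congr 1
  ext f
  constructor
  · rintro ⟨j, h1, hj, rfl⟩
    exact hj.lt_or_eq.elim (fun h ↦ .inl ⟨j, h1, by omega, rfl⟩) fun h ↦ .inr (h ▸ rfl)
  · rintro (⟨j, h1, hj, rfl⟩ | rfl)
    exacts [⟨j, h1, by omega, rfl⟩, ⟨i + 1, by omega, le_rfl, rfl⟩]

theorem exists_subset_zeroLocusUpTo_le_dim (hV : IsIrredVariety n V)
    (hP : ∀ j ∈ Finset.Icc 1 i, P j ∈ vanishingIdeal n V) :
    ∃ W, IsIrredVariety n W ∧ V ⊆ W ∧ W ⊆ zeroLocusUpTo n P i ∧ n ≤ dim n W + i := by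
  induction i with
  | zero => exact ⟨univ, isIrredVariety_univ, subset_univ V, zeroLocusUpTo_zero.superset,
      dim_univ.ge⟩
  | succ i ih =>
    obtain ⟨W, hW, hVW, hWP, hdim⟩ := ih fun j hj ↦
      hP j (Finset.Icc_subset_Icc_right i.le_succ hj)
    simp only [zeroLocusUpTo_succ, subset_inter_iff]
    by_cases hPW : P (i + 1) ∈ vanishingIdeal n W
    · exact ⟨W, hW, hVW, ⟨hWP, subset_zeroLocus_singleton_iff.2 hPW⟩, by omega⟩
    · obtain ⟨W', hW', hVW', hW'W, hW'P, hdim'⟩ :=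
        exists_hypersurface_section hV hW hVW (hP _ (Finset.right_mem_Icc.2 (by omega))) hPW
      exact ⟨W', hW', hVW', ⟨hW'W.trans hWP, hW'P⟩, by omega⟩

theorem maxCompDimEq_zeroLocusUpTo_iff (hV : IsIrredVariety n V)
    (hP : ∀ j ∈ Finset.Icc 1 i, P j ∈ vanishingIdeal n V) :
    MaxCompDimEq n (zeroLocusUpTo n P i) V (n - i) ↔
      DimAlongLE (zeroLocusUpTo n P i) V (n - i) := by
  rw [maxCompDimEq_iff isAlgebraicSet_zeroLocusUpTo, and_iff_right_iff_imp]
  intro hle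
  obtain ⟨W, hW, hVW, hWP, hdim⟩ := exists_subset_zeroLocusUpTo_le_dim hV hP
  have := hle hW hVW hWP
  exact ⟨W, hW, hVW, hWP, by omega⟩

theorem exists_polynomials_dimAlongLE {r : ℕ} (hr : r ≤ n) (m : ℕ → ℕ)
    (hm : ∀ j ∈ Finset.Icc 1 r, DimAlongLE (lowDegreeLocus V (m j)) V (n - j)) :
    ∃ P : ℕ → MvPolynomial (Fin n) ℂ, ∀ j ∈ Finset.Icc 1 r,
      P j ∈ vanishingIdeal n V ∧ (P j).totalDegree ≤ m j ∧
        DimAlongLE (zeroLocusUpTo n P j) V (n - j) := by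
  have hstep (j : ℕ) (X : Set (Fin n → ℂ)) : ∃ f, j < r → IsAlgebraicSet n X →
      DimAlongLE X V (n - j) → f ∈ vanishingIdeal n V ∧ f.totalDegree ≤ m (j + 1) ∧
        DimAlongLE (X ∩ zeroLocus n {f}) V (n - (j + 1)) := by
    by_cases h : j < r ∧ IsAlgebraicSet n X ∧ DimAlongLE X V (n - j)
    · obtain ⟨f, hf⟩ := exists_dimAlongLE_inter_zeroLocus h.2.1 (h.2.2.mono (by omega))
        (hm (j + 1) (Finset.mem_Icc.2 ⟨by omega, h.1⟩))
      exact ⟨f, fun _ _ _ ↦ hf⟩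
    · exact ⟨0, fun hj hX hXe ↦ absurd ⟨hj, hX, hXe⟩ h⟩
  choose F hF using hstep
  let Z : ℕ → Set (Fin n → ℂ) := Nat.rec univ fun j X ↦ X ∩ zeroLocus n {F j X}
  let P (j : ℕ) : MvPolynomial (Fin n) ℂ := F (j - 1) (Z (j - 1))
  have hZ (j : ℕ) : zeroLocusUpTo n P j = Z j := by
    induction j with
    | zero => exact zeroLocusUpTo_zero
    | succ j ih => rw [zeroLocusUpTo_succ, ih]; rfl
  have hdim (j : ℕ) (hj : j ≤ r) : DimAlongLE (Z j) V (n - j) := by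
    induction j with
    | zero => exact fun W hW _ _ ↦ dim_le hW
    | succ j ih => exact (hF j (Z j) hj (hZ j ▸ isAlgebraicSet_zeroLocusUpTo) (ih (by omega))).2.2
  refine ⟨P, fun j hj ↦ ?_⟩
  obtain ⟨j, rfl⟩ := Nat.exists_eq_add_of_le' (Finset.mem_Icc.1 hj).1
  have hjr := (Finset.mem_Icc.1 hj).2
  obtain ⟨hPV, hdeg, -⟩ := hF j (Z j) hjr (hZ j ▸ isAlgebraicSet_zeroLocusUpTo) (hdim j (by omega))
  exact ⟨hPV, hdeg, hZ (j + 1) ▸ hdim (j + 1) hjr⟩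

end LocalDimension

section PartialDegrees

variable {n} {V V' : Set (Fin n → ℂ)} {P : ℕ → MvPolynomial (Fin n) ℂ} {i m s : ℕ}

theorem exists_finset_maxCompDimEq_iff (hV : IsIrredVariety n V) (hi : i ≤ n) :
    (∃ I : Finset (MvPolynomial (Fin n) ℂ), (∀ f ∈ I, f.totalDegree ≤ m) ∧
      V ⊆ zeroLocus n I ∧ MaxCompDimEq n (zeroLocus n I) V (n - i)) ↔
      DimAlongLE (lowDegreeLocus V m) V (n - i) := by
  classical
  constructor
  · rintro ⟨I, hdeg, hVI, hmax⟩
    refine ((maxCompDimEq_iff isAlgebraicSet_zeroLocus).1 hmax).2.anti (zeroLocus_anti ?_)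
    exact fun f hf ↦ ⟨subset_zeroLocus_iff.1 hVI hf, hdeg f hf⟩
  · intro hm
    obtain ⟨P, hP⟩ := exists_polynomials_dimAlongLE hi (fun _ ↦ m) fun j hj ↦
      hm.mono (Nat.sub_le_sub_left (Finset.mem_Icc.1 hj).2 n)
    have hPV : ∀ j ∈ Finset.Icc 1 i, P j ∈ vanishingIdeal n V := fun j hj ↦ (hP j hj).1
    have hI : zeroLocus n ((Finset.Icc 1 i).image P) = zeroLocusUpTo n P i := by
      rw [zeroLocusUpTo]
      congr 1
      ext f
      simp [and_assoc, eq_comm]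
    refine ⟨(Finset.Icc 1 i).image P, ?_, ?_, ?_⟩
    · exact Finset.forall_mem_image.2 fun j hj ↦ (hP j hj).2.1
    · rwa [hI, subset_zeroLocusUpTo_iff]
    · rw [hI, maxCompDimEq_zeroLocusUpTo_iff hV hPV]
      rcases i.eq_zero_or_pos with rfl | hi0
      · exact fun W hW _ _ ↦ dim_le hW
      · exact (hP i (Finset.right_mem_Icc.2 hi0)).2.2

theorem exists_dimAlongLE_lowDegreeLocus (hV : IsIrredVariety n V) :
    ∃ m, DimAlongLE (lowDegreeLocus V m) V (dim n V) := by
  obtain ⟨S, hS⟩ := IsNoetherian.noetherian (vanishingIdeal n V)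
  refine ⟨S.sup totalDegree, fun W hW _ hWm ↦ dim_le_dim hW hV ?_⟩
  rw [← hV.isAlgebraicSet.vanishingIdeal_le_iff, ← hS, Ideal.span_le]
  exact fun f hf ↦ subset_zeroLocus_iff.1 hWm ⟨hS ▸ Ideal.subset_span hf, Finset.le_sup hf⟩

theorem partialDeg_le_iff (hV : IsIrredVariety n V) (hi : i ∈ Finset.Icc 1 (n - dim n V)) :
    partialDeg n V i ≤ m ↔ DimAlongLE (lowDegreeLocus V m) V (n - i) := by
  have hn := dim_le hV
  obtain ⟨h1, hi⟩ := Finset.mem_Icc.1 hi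
  have hδ : partialDeg n V i = sInf {m | DimAlongLE (lowDegreeLocus V m) V (n - i)} := by
    simp only [partialDeg, exists_finset_maxCompDimEq_iff hV (show i ≤ n by omega)]
    exact if_neg (by omega)
  obtain ⟨k, hk⟩ := exists_dimAlongLE_lowDegreeLocus hV
  have hmem : DimAlongLE (lowDegreeLocus V (partialDeg n V i)) V (n - i) :=
    hδ ▸ Nat.sInf_mem (s := {m | DimAlongLE (lowDegreeLocus V m) V (n - i)})
      ⟨k, hk.mono (by omega)⟩
  exact ⟨fun h ↦ hmem.anti (lowDegreeLocus_anti h), fun h ↦ hδ ▸ Nat.sInf_le h⟩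

theorem partialDeg_le_partialDeg (hV : IsIrredVariety n V) {i j : ℕ} (hi : 1 ≤ i) (hij : i ≤ j)
    (hj : j ≤ n - dim n V) : partialDeg n V i ≤ partialDeg n V j := by
  rw [partialDeg_le_iff hV (Finset.mem_Icc.2 ⟨hi, hij.trans hj⟩)]
  exact ((partialDeg_le_iff hV (Finset.mem_Icc.2 ⟨hi.trans hij, hj⟩)).1 le_rfl).mono
    (Nat.sub_le_sub_left hij n)

theorem partialDegE_of_le (hi : i ≤ n - dim n V) : partialDegE n V i = partialDeg n V i :=
  if_pos hi

theorem exists_isMinimalVariety (hV : IsIrredVariety n V) (hs : s ≤ n - dim n V) :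
    ∃ V', IsMinimalVariety n V V' s := by
  have hn := dim_le hV
  rcases hs.eq_or_lt with rfl | hs
  · exact ⟨V, hV, subset_rfl, by omega, fun f hf hf' ↦ absurd hf hf'⟩
  obtain ⟨W, hW, hVW, hdim, hWδ⟩ : ∃ W, IsIrredVariety n W ∧ V ⊆ W ∧ n - s ≤ dim n W ∧
      ∀ f ∈ vanishingIdeal n V, f ∉ vanishingIdeal n W →
        partialDeg n V (s + 1) ≤ f.totalDegree := by
    rcases hδ : partialDeg n V (s + 1) with _ | δ
    · exact ⟨univ, isIrredVariety_univ, subset_univ V, by simp [dim_univ], by simp⟩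
    · have hlow : ¬ DimAlongLE (lowDegreeLocus V δ) V (n - (s + 1)) := by
        rw [← partialDeg_le_iff hV (Finset.mem_Icc.2 ⟨by omega, hs⟩), hδ]
        omega
      simp only [DimAlongLE, not_forall, not_le] at hlow
      obtain ⟨W, hW, hVW, hWδ, hlt⟩ := hlow
      refine ⟨W, hW, hVW, by omega, fun f hf hfW ↦ ?_⟩
      by_contra! hdeg
      exact hfW (subset_zeroLocus_iff.1 hWδ ⟨hf, Nat.le_of_lt_succ hdeg⟩)
  obtain ⟨V', hV', hVV', hV'W, hdim'⟩ :=
    exists_isIrredVariety_dim_eq hV hW hVW (e := n - s) (by omega) hdim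
  refine ⟨V', hV', hVV', hdim', fun f hf hfV' ↦ ?_⟩
  rw [partialDegE_of_le hs, Nat.cast_le]
  exact hWδ f hf fun hfW ↦ hfV' (vanishingIdeal_anti hV'W hfW)

theorem IsMinimalVariety.subset_zeroLocusUpTo (hV' : IsMinimalVariety n V V' s)
    (hP : ∀ j ∈ Finset.Icc 1 i, P j ∈ vanishingIdeal n V)
    (hdeg : ∀ j ∈ Finset.Icc 1 i, (P j).totalDegree < partialDegE n V (s + 1)) :
    V' ⊆ zeroLocusUpTo n P i := by
  refine subset_zeroLocusUpTo_iff.2 fun j hj ↦ ?_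
  by_contra hPV'
  exact (hdeg j hj).not_ge (hV'.2.2.2 _ (hP j hj) hPV')

theorem IsMinimalVariety.exists_hypersurface_section (hV : IsIrredVariety n V)
    (hV' : IsMinimalVariety n V V' s) {f : MvPolynomial (Fin n) ℂ} (hfV : f ∈ vanishingIdeal n V)
    (hfV' : f ∉ vanishingIdeal n V') (hδ : partialDegE n V (s + 2) ≤ partialDegE n V (s + 1)) :
    ∃ W, IsMinimalVariety n V W (s + 1) ∧ W ⊆ V' ∧ W ⊆ zeroLocus n {f} := by
  obtain ⟨hirr, hVV', hdim, hmin⟩ := hV'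
  obtain ⟨W, hW, hVW, hWV', hWf, hdimW⟩ :=
    Paper.exists_hypersurface_section hV hirr hVV' hfV hfV'
  exact ⟨W, ⟨hW, hVW, by omega, fun g hg hgW ↦
    hδ.trans (hmin g hg fun hgV' ↦ hgW (vanishingIdeal_anti hWV' hgV'))⟩, hWV', hWf⟩

theorem exists_isMinimalVariety_subset_zeroLocusUpTo (hV : IsIrredVariety n V)
    (hi : i ≤ n - dim n V) (hP : ∀ j ∈ Finset.Icc 1 i, P j ∈ vanishingIdeal n V)
    (hdeg : ∀ j ∈ Finset.Icc 1 i, (P j).totalDegree ≤ partialDeg n V j)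
    (hdim : ∀ j ∈ Finset.Icc 1 i, DimAlongLE (zeroLocusUpTo n P j) V (n - j)) :
    ∃ V', IsMinimalVariety n V V' i ∧ V' ⊆ zeroLocusUpTo n P i := by
  induction i with
  | zero =>
    obtain ⟨V', hV'⟩ := exists_isMinimalVariety hV hi
    exact ⟨V', hV', zeroLocusUpTo_zero ▸ subset_univ V'⟩
  | succ i ih =>
    have hlast : i + 1 ∈ Finset.Icc 1 (i + 1) := Finset.right_mem_Icc.2 (by omega)
    rcases lt_or_ge (partialDegE n V (i + 1)) (partialDegE n V (i + 2)) with hlt | hge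
    · obtain ⟨V', hV'⟩ := exists_isMinimalVariety hV hi
      refine ⟨V', hV', hV'.subset_zeroLocusUpTo hP fun j hj ↦ lt_of_le_of_lt ?_ hlt⟩
      obtain ⟨h1, hji⟩ := Finset.mem_Icc.1 hj
      rw [partialDegE_of_le hi, Nat.cast_le]
      exact (hdeg j hj).trans (partialDeg_le_partialDeg hV h1 hji hi)
    · have hsub := Finset.Icc_subset_Icc_right (a := 1) i.le_succ
      obtain ⟨V', hV', hV'P⟩ := ih (by omega) (fun j hj ↦ hP j (hsub hj))
        (fun j hj ↦ hdeg j (hsub hj)) fun j hj ↦ hdim j (hsub hj)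
      have hPV' : P (i + 1) ∉ vanishingIdeal n V' := fun h ↦ by
        have := hdim _ hlast hV'.1 hV'.2.1 (zeroLocusUpTo_succ ▸
          subset_inter hV'P (subset_zeroLocus_singleton_iff.2 h))
        have := hV'.2.2.1
        omega
      obtain ⟨W, hW, hWV', hWP⟩ := hV'.exists_hypersurface_section hV (hP _ hlast) hPV' hge
      exact ⟨W, hW, zeroLocusUpTo_succ ▸ subset_inter (hWV'.trans hV'P) hWP⟩

theorem partialDeg_le_totalDegree (hV : IsIrredVariety n V)
    (hP : ∀ i ∈ Finset.Icc 1 (n - dim n V), MaxCompDimEq n (zeroLocusUpTo n P i) V (n - i) ∧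
      ∃ V', IsMinimalVariety n V V' i ∧ V' ⊆ zeroLocusUpTo n P i)
    (hi : i ∈ Finset.Icc 1 (n - dim n V)) : partialDeg n V i ≤ (P i).totalDegree := by
  obtain ⟨k, rfl⟩ := Nat.exists_eq_add_of_le' (Finset.mem_Icc.1 hi).1
  have hk := (Finset.mem_Icc.1 hi).2
  obtain ⟨V', hV', hV'P⟩ : ∃ V', IsMinimalVariety n V V' k ∧ V' ⊆ zeroLocusUpTo n P k := by
    rcases k.eq_zero_or_pos with rfl | hk0
    · simpa only [zeroLocusUpTo_zero, subset_univ, and_true] using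
        exists_isMinimalVariety hV (Nat.zero_le _)
    · exact (hP k (Finset.mem_Icc.2 ⟨hk0, by omega⟩)).2
  obtain ⟨hmax, V'', hV'', hV''P⟩ := hP _ hi
  have hPV : P (k + 1) ∈ vanishingIdeal n V := subset_zeroLocusUpTo_iff.1
    (hV''.2.1.trans hV''P) _ (Finset.right_mem_Icc.2 (by omega))
  have hPV' : P (k + 1) ∉ vanishingIdeal n V' := fun h ↦ by
    have := ((maxCompDimEq_iff isAlgebraicSet_zeroLocusUpTo).1 hmax).2 hV'.1 hV'.2.1
      (zeroLocusUpTo_succ ▸ subset_inter hV'P (subset_zeroLocus_singleton_iff.2 h))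
    have := hV'.2.2.1
    omega
  simpa only [partialDegE_of_le hk, Nat.cast_le] using hV'.2.2.2 _ hPV hPV'

end PartialDegrees

theorem lexLE_of_forall_le {m : ℕ} {f g : ℕ → ℕ} (h : ∀ i ∈ Finset.Icc 1 m, f i ≤ g i) :
    LexLE m f g := by
  by_cases! hne : ∃ j ∈ Finset.Icc 1 m, f j ≠ g j
  · classical
    obtain ⟨hmem, hfg⟩ := Nat.find_spec hne
    refine .inr ⟨Nat.find hne, hmem, fun j h1 hj ↦ ?_, (h _ hmem).lt_of_ne hfg⟩
    by_contra hj'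
    exact Nat.find_min hne hj
      ⟨Finset.mem_Icc.2 ⟨h1, hj.le.trans (Finset.mem_Icc.1 hmem).2⟩, hj'⟩
  · exact .inl hne

/-- Lemma 5.3 of the paper: existence of polynomials `P₁, …, P_{n-d}` with
`deg P_i = δ_i(V)`, such that the top-dimensional components of `Z(P₁, …, P_i)` containing `V`
have dimension `n - i`, `Z(P₁, …, P_i)` contains an `(n-i)`-minimal variety of `V`, and the
degree tuple is lexicographically least among all tuples satisfying these two conclusions. -/
theorem statement15 (n : ℕ) (V : Set (Fin n → ℂ)) (d : ℕ)
    (hV : IsIrredVariety n V) (hd : dim n V = d) :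
    ∃ P : ℕ → MvPolynomial (Fin n) ℂ,
      (∀ i ∈ Finset.Icc 1 (n - d),
        MaxCompDimEq n (zeroLocusUpTo n P i) V (n - i) ∧
        (∃ V', IsMinimalVariety n V V' i ∧ V' ⊆ zeroLocusUpTo n P i) ∧
        (P i).totalDegree = partialDeg n V i) ∧
      ∀ Q : ℕ → MvPolynomial (Fin n) ℂ,
        (∀ i ∈ Finset.Icc 1 (n - d),
          MaxCompDimEq n (zeroLocusUpTo n Q i) V (n - i) ∧
          (∃ V', IsMinimalVariety n V V' i ∧ V' ⊆ zeroLocusUpTo n Q i)) →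
        LexLE (n - d) (fun i => (P i).totalDegree) (fun i => (Q i).totalDegree) := by
  subst hd
  obtain ⟨P, hP⟩ := exists_polynomials_dimAlongLE (Nat.sub_le n (dim n V)) (partialDeg n V)
    fun i hi ↦ (partialDeg_le_iff hV hi).1 le_rfl
  have hcut : ∀ i ∈ Finset.Icc 1 (n - dim n V), MaxCompDimEq n (zeroLocusUpTo n P i) V (n - i) ∧
      ∃ V', IsMinimalVariety n V V' i ∧ V' ⊆ zeroLocusUpTo n P i := by
    intro i hi
    have hsub := Finset.Icc_subset_Icc_right (a := 1) (Finset.mem_Icc.1 hi).2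
    have hPV : ∀ j ∈ Finset.Icc 1 i, P j ∈ vanishingIdeal n V := fun j hj ↦ (hP j (hsub hj)).1
    exact ⟨(maxCompDimEq_zeroLocusUpTo_iff hV hPV).2 (hP i hi).2.2,
      exists_isMinimalVariety_subset_zeroLocusUpTo hV (Finset.mem_Icc.1 hi).2 hPV
        (fun j hj ↦ (hP j (hsub hj)).2.1) fun j hj ↦ (hP j (hsub hj)).2.2⟩
  refine ⟨P, fun i hi ↦ ⟨(hcut i hi).1, (hcut i hi).2, ?_⟩, fun Q hQ ↦ ?_⟩
  · exact (hP i hi).2.1.antisymm (partialDeg_le_totalDegree hV hcut hi)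
  · exact lexLE_of_forall_le fun i hi ↦ (hP i hi).2.1.trans (partialDeg_le_totalDegree hV hQ hi)

end Paper
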